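/- Let 𝒜 = {S_2, S_3, …} be the collection of closed squares in ℝ² where S_i has side length 1/i for i ≥ 2. Suppose that for every ε > 0 the collection 𝒜 can be packed into a rectangle of area π²/6 − 1 + ε. Then there exists a packing of 𝒜 into a rectangle of area π²/6 − 1 such that the complement, within that rectangle, of the union of the packed squares has Lebesgue measure zero (i.e., 𝒜 tiles a rectangle of area π²/6 − 1). -/

import Mathlib

/-!
For rectangles with sides in `[0, M]`, orthogonality of the matrices, containment and disjointness
of interiors are closed conditions on the triple (sides, matrices, translations), and this triple
ranges over a compact set. The areas of the rectangles that admit a packing therefore form a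
compact set of reals. A ball in one of the packed sets keeps both sides of the rectangle away
from `0`, so bounded area means bounded sides; hence an area that is a limit of admissible areas
is admissible. At the total area of the packed sets, a packing has no room left over.
-/

open Pointwise

noncomputable section

/-- The rigid motion `(θ, ξ)` acting on a point of `ℝⁿ`: `x ↦ ξ + θx`. -/
def rmApply {n : ℕ} (θ : Matrix (Fin n) (Fin n) ℝ) (ξ : EuclideanSpace ℝ (Fin n))
    (x : EuclideanSpace ℝ (Fin n)) : EuclideanSpace ℝ (Fin n) :=
  ξ + (EuclideanSpace.equiv (Fin n) ℝ).symm (θ.mulVec (EuclideanSpace.equiv (Fin n) ℝ x))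

/-- `(θ, ξ)` is a packing of the family `A` into the set `C`: each `θ i` is orthogonal,
each repositioned set `σᵢ(Aᵢ)` is contained in `C`, and the repositioned sets have
pairwise disjoint interiors. -/
def IsPacking {n : ℕ} {ι : Type*} (A : ι → Set (EuclideanSpace ℝ (Fin n)))
    (θ : ι → Matrix (Fin n) (Fin n) ℝ) (ξ : ι → EuclideanSpace ℝ (Fin n))
    (C : Set (EuclideanSpace ℝ (Fin n))) : Prop :=
  (∀ i, θ i ∈ Matrix.orthogonalGroup (Fin n) ℝ) ∧
  (∀ i, rmApply (θ i) (ξ i) '' A i ⊆ C) ∧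
  Pairwise fun i j =>
    interior (rmApply (θ i) (ξ i) '' A i) ∩ interior (rmApply (θ j) (ξ j) '' A j) = ∅

/-- There exists a packing of `A` into `C`. -/
def PacksInto {n : ℕ} {ι : Type*} (A : ι → Set (EuclideanSpace ℝ (Fin n)))
    (C : Set (EuclideanSpace ℝ (Fin n))) : Prop :=
  ∃ θ ξ, IsPacking A θ ξ C

/-- The closed axis-aligned rectangle `[0, w] × [0, h]` in `ℝ²`. -/
def rect (w h : ℝ) : Set (EuclideanSpace ℝ (Fin 2)) :=
  {x | x 0 ∈ Set.Icc 0 w ∧ x 1 ∈ Set.Icc 0 h}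

/-- The collection of squares of side lengths `1/2`, `1/3`, `1/4`, …: the `i`-th set
(for `i : ℕ`) is a closed square of side length `1/(i+2)`. -/
def reciprocalSquares : ℕ → Set (EuclideanSpace ℝ (Fin 2)) :=
  fun i => rect (1 / ((i : ℝ) + 2)) (1 / ((i : ℝ) + 2))

open Filter Topology MeasureTheory Metric

lemma isCompact_unitaryGroup (n 𝕜 : Type*) [Fintype n] [DecidableEq n] [RCLike 𝕜] :
    IsCompact (Matrix.unitaryGroup n 𝕜 : Set (Matrix n n 𝕜)) := by
  have hbox : IsCompact (Set.univ.pi fun _ => Set.univ.pi fun _ => closedBall 0 1 :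
      Set (Matrix n n 𝕜)) :=
    isCompact_univ_pi fun _ => isCompact_univ_pi fun _ => isCompact_closedBall 0 1
  have hclosed : IsClosed (Matrix.unitaryGroup n 𝕜 : Set (Matrix n n 𝕜)) := isClosed_unitary
  exact hbox.of_isClosed_subset hclosed fun θ hθ i _ j _ =>
    mem_closedBall_zero_iff.2 (entry_norm_bound_of_unitary hθ i j)

section RigidMotion

variable {n : ℕ} {θ : Matrix (Fin n) (Fin n) ℝ}

lemma norm_rmApply_zero (hθ : θ ∈ Matrix.orthogonalGroup (Fin n) ℝ)
    (x : EuclideanSpace ℝ (Fin n)) : ‖rmApply θ 0 x‖ = ‖x‖ := by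
  have hx : rmApply θ 0 x = Matrix.toEuclideanCLM (n := Fin n) (𝕜 := ℝ) θ x := zero_add _
  rw [hx]
  exact ContinuousLinearMap.norm_map_of_mem_unitary (Unitary.map_mem _ hθ) x

lemma rmApply_eq_add (θ : Matrix (Fin n) (Fin n) ℝ) (ξ x : EuclideanSpace ℝ (Fin n)) :
    rmApply θ ξ x = ξ + rmApply θ 0 x := by
  simp only [rmApply, zero_add]

lemma rmApply_zero_sub (θ : Matrix (Fin n) (Fin n) ℝ) (x y : EuclideanSpace ℝ (Fin n)) :
    rmApply θ 0 (x - y) = rmApply θ 0 x - rmApply θ 0 y := by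
  simp only [rmApply, zero_add, map_sub, Matrix.mulVec_sub]

@[fun_prop]
lemma continuous_rmApply {X : Type*} [TopologicalSpace X] {θ : X → Matrix (Fin n) (Fin n) ℝ}
    {ξ f : X → EuclideanSpace ℝ (Fin n)} (hθ : Continuous θ) (hξ : Continuous ξ)
    (hf : Continuous f) : Continuous fun a => rmApply (θ a) (ξ a) (f a) := by
  unfold rmApply
  fun_prop

/-- The rigid motion with orthogonal matrix `θ` and translation vector `ξ`, as an isometric
equivalence of `ℝⁿ`. Its inverse `x ↦ θᵀ(x - ξ)` is written with `rmApply`, so that it is visibly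
continuous in `θ` and `ξ`. -/
def rigidMotion (θ : Matrix (Fin n) (Fin n) ℝ) (hθ : θ ∈ Matrix.orthogonalGroup (Fin n) ℝ)
    (ξ : EuclideanSpace ℝ (Fin n)) : EuclideanSpace ℝ (Fin n) ≃ᵢ EuclideanSpace ℝ (Fin n) :=
  .mk' (rmApply θ ξ) (fun x => rmApply θ.transpose 0 (x - ξ))
    (fun x => by
      have hθθ : θ * θ.transpose = 1 := (Matrix.mem_orthogonalGroup_iff (Fin n) ℝ).1 hθ
      rw [rmApply, rmApply, zero_add, ContinuousLinearEquiv.apply_symm_apply, Matrix.mulVec_mulVec,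
        hθθ, Matrix.one_mulVec, ContinuousLinearEquiv.symm_apply_apply, add_sub_cancel])
    (Isometry.of_dist_eq fun x y => by
      rw [rmApply_eq_add θ ξ x, rmApply_eq_add θ ξ y, dist_add_left, dist_eq_norm,
        ← rmApply_zero_sub, norm_rmApply_zero hθ, dist_eq_norm])

lemma mem_interior_rmApply_image_iff (hθ : θ ∈ Matrix.orthogonalGroup (Fin n) ℝ)
    {ξ x : EuclideanSpace ℝ (Fin n)} {A : Set (EuclideanSpace ℝ (Fin n))} :
    x ∈ interior (rmApply θ ξ '' A) ↔ rmApply θ.transpose 0 (x - ξ) ∈ interior A := by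
  change x ∈ interior ((rigidMotion θ hθ ξ).toHomeomorph '' A) ↔ _
  rw [← Homeomorph.image_interior, Homeomorph.image_eq_preimage_symm]
  rfl

lemma volume_rmApply_image (hθ : θ ∈ Matrix.orthogonalGroup (Fin n) ℝ)
    (ξ : EuclideanSpace ℝ (Fin n)) (A : Set (EuclideanSpace ℝ (Fin n))) :
    volume (rmApply θ ξ '' A) = volume A := by
  rw [← EuclideanSpace.euclideanHausdorffMeasure_eq_volume]
  exact (rigidMotion θ hθ ξ).isometry.euclideanHausdorffMeasure_image A

lemma volume_frontier_rmApply_image (hθ : θ ∈ Matrix.orthogonalGroup (Fin n) ℝ)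
    (ξ : EuclideanSpace ℝ (Fin n)) (A : Set (EuclideanSpace ℝ (Fin n))) :
    volume (frontier (rmApply θ ξ '' A)) = volume (frontier A) := by
  rw [← volume_rmApply_image hθ ξ (frontier A)]
  exact congrArg volume ((rigidMotion θ hθ ξ).toHomeomorph.image_frontier A).symm

end RigidMotion

lemma aedisjoint_of_disjoint_interior {X : Type*} [TopologicalSpace X] [MeasurableSpace X]
    {μ : Measure X} {A B : Set X} (hA : μ (frontier A) = 0) (hB : μ (frontier B) = 0)
    (hAB : Disjoint (interior A) (interior B)) : AEDisjoint μ A B :=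
  hAB.aedisjoint.congr (interior_ae_eq_of_null_frontier hA).symm
    (interior_ae_eq_of_null_frontier hB).symm

section Packing

variable {n : ℕ} {ι : Type*} {A : ι → Set (EuclideanSpace ℝ (Fin n))}

lemma IsPacking.volume_iUnion [Countable ι] {θ : ι → Matrix (Fin n) (Fin n) ℝ}
    {ξ : ι → EuclideanSpace ℝ (Fin n)} {C : Set (EuclideanSpace ℝ (Fin n))}
    (hP : IsPacking A θ ξ C) (hA : ∀ i, volume (frontier (A i)) = 0) :
    volume (⋃ i, rmApply (θ i) (ξ i) '' A i) = ∑' i, volume (A i) := by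
  obtain ⟨hθ, -, hdisj⟩ := hP
  have hfrontier : ∀ i, volume (frontier (rmApply (θ i) (ξ i) '' A i)) = 0 := fun i => by
    rw [volume_frontier_rmApply_image (hθ i), hA i]
  rw [measure_iUnion₀ (fun i j hij => aedisjoint_of_disjoint_interior (hfrontier i) (hfrontier j)
    (Set.disjoint_iff_inter_eq_empty.2 (hdisj hij)))
    fun i => nullMeasurableSet_of_null_frontier (hfrontier i)]
  exact tsum_congr fun i => volume_rmApply_image (hθ i) (ξ i) (A i)

lemma IsPacking.volume_sdiff_eq_zero [Countable ι] {θ : ι → Matrix (Fin n) (Fin n) ℝ}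
    {ξ : ι → EuclideanSpace ℝ (Fin n)} {C : Set (EuclideanSpace ℝ (Fin n))}
    (hP : IsPacking A θ ξ C) (hA : ∀ i, volume (frontier (A i)) = 0)
    (hC : volume C ≠ ⊤) (hsum : volume C ≤ ∑' i, volume (A i)) :
    volume (C \ ⋃ i, rmApply (θ i) (ξ i) '' A i) = 0 := by
  have hmeas : NullMeasurableSet (⋃ i, rmApply (θ i) (ξ i) '' A i) volume :=
    .iUnion fun i => nullMeasurableSet_of_null_frontier
      ((volume_frontier_rmApply_image (hP.1 i) (ξ i) (A i)).trans (hA i))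
  have hsub : ⋃ i, rmApply (θ i) (ξ i) '' A i ⊆ C := Set.iUnion_subset hP.2.1
  rw [measure_sdiff hsub hmeas (measure_ne_top_of_subset hsub hC), hP.volume_iUnion hA,
    tsub_eq_zero_of_le hsum]

variable {P : Type*} [TopologicalSpace P] {C : P → Set (EuclideanSpace ℝ (Fin n))}

lemma isClosed_setOfPred_isPacking
    (hC : IsClosed {q : P × EuclideanSpace ℝ (Fin n) | q.2 ∈ C q.1}) :
    IsClosed {q : P × (ι → Matrix (Fin n) (Fin n) ℝ) × (ι → EuclideanSpace ℝ (Fin n)) |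
      IsPacking A q.2.1 q.2.2 (C q.1)} := by
  -- The inverse motions vary continuously with the parameters, so for each `x` it is a closed
  -- condition that `x` is not interior to both copies.
  have hiff : ∀ q : P × (ι → Matrix (Fin n) (Fin n) ℝ) × (ι → EuclideanSpace ℝ (Fin n)),
      IsPacking A q.2.1 q.2.2 (C q.1) ↔ (∀ i, q.2.1 i ∈ Matrix.orthogonalGroup (Fin n) ℝ) ∧
        (∀ i, ∀ x ∈ A i, rmApply (q.2.1 i) (q.2.2 i) x ∈ C q.1) ∧
        ∀ i j, i ≠ j → ∀ x, rmApply (q.2.1 i).transpose 0 (x - q.2.2 i) ∈ (interior (A i))ᶜ ∨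
          rmApply (q.2.1 j).transpose 0 (x - q.2.2 j) ∈ (interior (A j))ᶜ := fun q => by
    refine and_congr_right fun hθ => and_congr (by simp only [Set.image_subset_iff]; rfl) ?_
    simp only [Pairwise, Set.eq_empty_iff_forall_notMem, Set.mem_inter_iff, not_and_or,
      Set.mem_compl_iff, mem_interior_rmApply_image_iff (hθ _)]
  simp only [hiff, Set.ofPred_and, Set.ofPred_forall, Set.ofPred_or]
  refine .inter (isClosed_iInter fun i => isClosed_unitary.preimage (by fun_prop)) (.inter ?_ ?_)
  · exact isClosed_iInter fun i => isClosed_biInter fun x _ =>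
      hC.preimage (f := fun q : P × (ι → Matrix (Fin n) (Fin n) ℝ) ×
        (ι → EuclideanSpace ℝ (Fin n)) => (q.1, rmApply (q.2.1 i) (q.2.2 i) x)) (by fun_prop)
  · exact isClosed_iInter fun i => isClosed_iInter fun j => isClosed_iInter fun _ =>
      isClosed_iInter fun x => .union
        (isOpen_interior.isClosed_compl.preimage (by fun_prop))
        (isOpen_interior.isClosed_compl.preimage (by fun_prop))

lemma IsPacking.norm_translation_le {θ : ι → Matrix (Fin n) (Fin n) ℝ}
    {ξ : ι → EuclideanSpace ℝ (Fin n)} {R : ℝ} (hP : IsPacking A θ ξ (closedBall 0 R)) {i : ι}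
    {x : EuclideanSpace ℝ (Fin n)} (hx : x ∈ A i) : ‖ξ i‖ ≤ R + ‖x‖ := by
  have hmem : ‖rmApply (θ i) (ξ i) x‖ ≤ R :=
    mem_closedBall_zero_iff.1 (hP.2.1 i (Set.mem_image_of_mem _ hx))
  calc ‖ξ i‖ = ‖rmApply (θ i) (ξ i) x - rmApply (θ i) 0 x‖ := by
        rw [rmApply_eq_add, add_sub_cancel_right]
    _ ≤ ‖rmApply (θ i) (ξ i) x‖ + ‖rmApply (θ i) 0 x‖ := norm_sub_le _ _
    _ ≤ R + ‖x‖ := by rw [norm_rmApply_zero (hP.1 i)]; gcongr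

lemma isCompact_setOfPred_isPacking (hA : ∀ i, (A i).Nonempty) {Q : Set P} (hQ : IsCompact Q)
    (hC : IsClosed {q : P × EuclideanSpace ℝ (Fin n) | q.2 ∈ C q.1}) {R : ℝ}
    (hR : ∀ p ∈ Q, C p ⊆ closedBall 0 R) :
    IsCompact {q : P × (ι → Matrix (Fin n) (Fin n) ℝ) × (ι → EuclideanSpace ℝ (Fin n)) |
      q.1 ∈ Q ∧ IsPacking A q.2.1 q.2.2 (C q.1)} := by
  choose x hx using hA
  have hbox : IsCompact (Q ×ˢ
      ((Set.univ.pi fun _ => Matrix.orthogonalGroup (Fin n) ℝ) ×ˢ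
        Set.univ.pi fun i => closedBall 0 (R + ‖x i‖)) :
      Set (P × (ι → Matrix (Fin n) (Fin n) ℝ) × (ι → EuclideanSpace ℝ (Fin n)))) :=
    hQ.prod <| (isCompact_univ_pi fun _ => isCompact_unitaryGroup (Fin n) ℝ).prod <|
      isCompact_univ_pi fun _ => isCompact_closedBall _ _
  convert! hbox.inter_right (isClosed_setOfPred_isPacking (A := A) hC) using 1
  ext ⟨p, θ, ξ⟩
  refine ⟨fun ⟨hp, hP⟩ => ⟨⟨hp, fun i _ => hP.1 i, fun i _ => ?_⟩, hP⟩,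
    fun ⟨⟨hp, _⟩, hP⟩ => ⟨hp, hP⟩⟩
  have hball : IsPacking A θ ξ (closedBall 0 R) :=
    ⟨hP.1, fun i => (hP.2.1 i).trans (hR p hp), hP.2.2⟩
  exact mem_closedBall_zero_iff.2 (hball.norm_translation_le (hx i))

end Packing

section Rectangle

lemma rect_eq_preimage (w h : ℝ) :
    rect w h = EuclideanSpace.equiv (Fin 2) ℝ ⁻¹' Set.Icc 0 ![w, h] := by
  ext x
  simp only [rect, Set.mem_ofPred_eq, Set.mem_preimage, Set.mem_Icc, Pi.le_def, Fin.forall_fin_two]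
  exact and_and_and_comm

lemma isCompact_rect (w h : ℝ) : IsCompact (rect w h) := by
  rw [rect_eq_preimage]
  exact (EuclideanSpace.equiv (Fin 2) ℝ).toHomeomorph.isCompact_preimage.2 isCompact_Icc

lemma convex_rect (w h : ℝ) : Convex ℝ (rect w h) := by
  rw [rect_eq_preimage]
  exact (convex_Icc _ _).linear_preimage (EuclideanSpace.equiv (Fin 2) ℝ).toLinearMap

lemma volume_rect {w : ℝ} (hw : 0 ≤ w) (h : ℝ) : volume (rect w h) = ENNReal.ofReal (w * h) := by
  rw [rect_eq_preimage]
  refine ((PiLp.volume_preserving_ofLp (Fin 2)).measure_preimage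
    measurableSet_Icc.nullMeasurableSet).trans ?_
  simp [Real.volume_Icc_pi, ENNReal.ofReal_mul hw]

lemma rect_subset_rect {w h w' h' : ℝ} (hw : w ≤ w') (hh : h ≤ h') : rect w h ⊆ rect w' h' :=
  fun _ hx => ⟨⟨hx.1.1, hx.1.2.trans hw⟩, hx.2.1, hx.2.2.trans hh⟩

lemma isClosed_setOfPred_mem_rect :
    IsClosed {q : (ℝ × ℝ) × EuclideanSpace ℝ (Fin 2) | q.2 ∈ rect q.1.1 q.1.2} := by
  simp only [rect, Set.mem_Icc, Set.ofPred_and]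
  refine .inter (.inter ?_ ?_) (.inter ?_ ?_) <;> exact isClosed_le (by fun_prop) (by fun_prop)

lemma two_mul_le_of_closedBall_subset {κ : Type*} [Fintype κ] {c : EuclideanSpace ℝ κ}
    {r a b : ℝ} (hr : 0 ≤ r) (k : κ) (hball : ∀ x ∈ closedBall c r, x k ∈ Set.Icc a b) :
    2 * r ≤ b - a := by
  classical
  have hplus := hball (c + EuclideanSpace.single k r) (by simp [abs_of_nonneg hr])
  have hminus := hball (c - EuclideanSpace.single k r) (by simp [abs_of_nonneg hr])
  simp only [PiLp.add_apply, PiLp.sub_apply, PiLp.single_apply, if_true, Set.mem_Icc]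
    at hplus hminus
  linarith

lemma IsPacking.two_mul_le_sides {ι : Type*} {A : ι → Set (EuclideanSpace ℝ (Fin 2))}
    {θ : ι → Matrix (Fin 2) (Fin 2) ℝ} {ξ : ι → EuclideanSpace ℝ (Fin 2)} {w h r : ℝ}
    (hP : IsPacking A θ ξ (rect w h)) {i : ι} {c : EuclideanSpace ℝ (Fin 2)} (hr : 0 ≤ r)
    (hball : closedBall c r ⊆ A i) : 2 * r ≤ w ∧ 2 * r ≤ h := by
  have hsub : closedBall (rmApply (θ i) (ξ i) c) r ⊆ rect w h := by
    have himage := (rigidMotion (θ i) (hP.1 i) (ξ i)).image_closedBall c r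
    exact himage.symm.subset.trans ((Set.image_mono hball).trans (hP.2.1 i))
  exact ⟨by simpa using two_mul_le_of_closedBall_subset hr 0 fun x hx => (hsub hx).1,
    by simpa using two_mul_le_of_closedBall_subset hr 1 fun x hx => (hsub hx).2⟩

end Rectangle

section Limit

variable {ι : Type*} {A : ι → Set (EuclideanSpace ℝ (Fin 2))}

lemma isCompact_areas_of_packings (hA : ∀ i, (A i).Nonempty) (M : ℝ) :
    IsCompact {a : ℝ | ∃ w ∈ Set.Icc 0 M, ∃ h ∈ Set.Icc 0 M, w * h = a ∧
      PacksInto A (rect w h)} := by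
  obtain ⟨R, hR⟩ := (isCompact_rect M M).isBounded.subset_closedBall 0
  have hpackings := isCompact_setOfPred_isPacking (C := fun p : ℝ × ℝ => rect p.1 p.2) hA
    ((isCompact_Icc (a := (0 : ℝ)) (b := M)).prod (isCompact_Icc (a := (0 : ℝ)) (b := M)))
    isClosed_setOfPred_mem_rect fun p hp => (rect_subset_rect hp.1.2 hp.2.2).trans hR
  convert! hpackings.image (f := fun q => q.1.1 * q.1.2) (by fun_prop) using 1
  ext a
  constructor
  · rintro ⟨w, hw, h, hh, rfl, θ, ξ, hP⟩
    exact ⟨((w, h), θ, ξ), ⟨⟨hw, hh⟩, hP⟩, rfl⟩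
  · rintro ⟨⟨⟨w, h⟩, θ, ξ⟩, ⟨⟨hw, hh⟩, hP⟩, rfl⟩
    exact ⟨w, hw, h, hh, rfl, θ, ξ, hP⟩

lemma exists_packsInto_rect_of_forall_add_pos (hA : ∀ i, (A i).Nonempty)
    (hinterior : ∃ i, (interior (A i)).Nonempty) {V : ℝ}
    (hpack : ∀ ε : ℝ, 0 < ε → ∃ w h : ℝ, 0 ≤ w ∧ 0 ≤ h ∧ w * h = V + ε ∧
      PacksInto A (rect w h)) :
    ∃ w h : ℝ, 0 ≤ w ∧ 0 ≤ h ∧ w * h = V ∧ PacksInto A (rect w h) := by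
  obtain ⟨i, c, hc⟩ := hinterior
  obtain ⟨r, hr, hball⟩ := nhds_basis_closedBall.mem_iff.1 (mem_interior_iff_mem_nhds.1 hc)
  have hareas : Set.Ioc V (V + 1) ⊆ {a : ℝ | ∃ w ∈ Set.Icc 0 ((V + 1) / (2 * r)),
      ∃ h ∈ Set.Icc 0 ((V + 1) / (2 * r)), w * h = a ∧ PacksInto A (rect w h)} := by
    rintro a ⟨hVa, haV⟩
    obtain ⟨w, h, hw, hh, hwh, θ, ξ, hP⟩ := hpack (a - V) (sub_pos.2 hVa)
    obtain ⟨hrw, hrh⟩ := hP.two_mul_le_sides hr.le hball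
    rw [add_sub_cancel] at hwh
    refine ⟨w, ⟨hw, ?_⟩, h, ⟨hh, ?_⟩, hwh, θ, ξ, hP⟩ <;> rw [le_div_iff₀ (by positivity)]
    · calc w * (2 * r) ≤ w * h := by gcongr
        _ ≤ V + 1 := hwh.trans_le haV
    · calc h * (2 * r) ≤ h * w := by gcongr
        _ ≤ V + 1 := (mul_comm h w).trans_le (hwh.trans_le haV)
  have hV : V ∈ closure (Set.Ioc V (V + 1)) := by
    rw [closure_Ioc (by simp)]
    exact Set.left_mem_Icc.2 (by simp)
  obtain ⟨w, hw, h, hh, hwh, hP⟩ :=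
    closure_minimal hareas (isCompact_areas_of_packings hA _).isClosed hV
  exact ⟨w, h, hw.1, hh.1, hwh, hP⟩

end Limit

theorem reciprocal_squares_tile_rectangle_general {ι : Type*} [Countable ι]
    {A : ι → Set (EuclideanSpace ℝ (Fin 2))} (hne : ∀ i, (A i).Nonempty)
    (hA : ∀ i, volume (frontier (A i)) = 0) {V : ℝ} (hV : 0 < V)
    (hsum : ∑' i, volume (A i) = ENNReal.ofReal V)
    (h : ∀ ε : ℝ, 0 < ε → ∃ w h' : ℝ, 0 ≤ w ∧ 0 ≤ h' ∧ w * h' = V + ε ∧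
      PacksInto A (rect w h')) :
    ∃ w h' : ℝ, 0 ≤ w ∧ 0 ≤ h' ∧ w * h' = V ∧
      ∃ (θ : ι → Matrix (Fin 2) (Fin 2) ℝ) (ξ : ι → EuclideanSpace ℝ (Fin 2)),
        IsPacking A θ ξ (rect w h') ∧
        volume (rect w h' \ ⋃ i, rmApply (θ i) (ξ i) '' A i) = 0 := by
  have hinterior : ∃ i, (interior (A i)).Nonempty := by
    by_contra! hempty
    have hnull : ∀ i, volume (A i) = 0 := fun i => by
      rw [← measure_interior_of_null_frontier (hA i), hempty i, measure_empty]
    exact hV.not_ge (ENNReal.ofReal_eq_zero.1 (by rw [← hsum]; simp only [hnull, tsum_zero]))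
  obtain ⟨w, h', hw, hh', hwh, θ, ξ, hP⟩ := exists_packsInto_rect_of_forall_add_pos hne hinterior h
  have hvol : volume (rect w h') = ENNReal.ofReal V := by rw [volume_rect hw, hwh]
  exact ⟨w, h', hw, hh', hwh, θ, ξ, hP, hP.volume_sdiff_eq_zero hA
    (hvol ▸ ENNReal.ofReal_ne_top) (hvol.trans hsum.symm).le⟩

lemma reciprocalSquares_nonempty (i : ℕ) : (reciprocalSquares i).Nonempty :=
  ⟨0, ⟨le_rfl, by positivity⟩, le_rfl, by positivity⟩

lemma hasSum_one_div_nat_add_two_sq :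
    HasSum (fun i : ℕ => 1 / ((i : ℝ) + 2) ^ 2) (Real.pi ^ 2 / 6 - 1) := by
  simpa [Finset.sum_range_succ] using (hasSum_nat_add_iff' 2).2 hasSum_zeta_two

lemma tsum_volume_reciprocalSquares :
    ∑' i, volume (reciprocalSquares i) = ENNReal.ofReal (Real.pi ^ 2 / 6 - 1) := by
  have hsquare : ∀ i : ℕ, volume (reciprocalSquares i) =
      ENNReal.ofReal (1 / ((i : ℝ) + 2) ^ 2) := fun i => by
    rw [reciprocalSquares, volume_rect (by positivity), ← sq, one_div_pow]
  simp only [hsquare]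
  rw [← ENNReal.ofReal_tsum_of_nonneg (fun i => by positivity)
    hasSum_one_div_nat_add_two_sq.summable, hasSum_one_div_nat_add_two_sq.tsum_eq]

lemma pi_sq_div_six_sub_one_pos : 0 < Real.pi ^ 2 / 6 - 1 := by
  nlinarith [Real.pi_gt_three]

/-- **Corollary 2 (first part).** If for every `ε > 0` the squares of side lengths `1/2`,
`1/3`, `1/4`, … can be packed into a rectangle of area `π²/6 - 1 + ε`, then they tile a
rectangle of area `π²/6 - 1`: there is a packing into some rectangle of that area whose
complement in the rectangle has Lebesgue measure zero. -/
theorem reciprocal_squares_tile_rectangle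
    (h : ∀ ε : ℝ, 0 < ε → ∃ w h' : ℝ, 0 ≤ w ∧ 0 ≤ h' ∧
      w * h' = Real.pi ^ 2 / 6 - 1 + ε ∧ PacksInto reciprocalSquares (rect w h')) :
    ∃ w h' : ℝ, 0 ≤ w ∧ 0 ≤ h' ∧ w * h' = Real.pi ^ 2 / 6 - 1 ∧
      ∃ (θ : ℕ → Matrix (Fin 2) (Fin 2) ℝ) (ξ : ℕ → EuclideanSpace ℝ (Fin 2)),
        IsPacking reciprocalSquares θ ξ (rect w h') ∧
        MeasureTheory.volume
          (rect w h' \ ⋃ i, rmApply (θ i) (ξ i) '' reciprocalSquares i) = 0 := by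
  exact reciprocal_squares_tile_rectangle_general reciprocalSquares_nonempty
    (fun _ => (convex_rect _ _).addHaar_frontier volume) pi_sq_div_six_sub_one_pos
    tsum_volume_reciprocalSquares h
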